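/- arXiv:2207.08066 — 2 statements merged into one kernel-verified Lean document; each statement's English description precedes it below -/
import Mathlib

section
/- (Theorem 2.2) Let η ∈ S_{L,M} with carrier u, and let J(η) = {j ∈ ℕ | η_j + u_j ≥ L}. Then for every subset I ⊆ J(η), T_1^M(r_I(η)) = l_I(T_L(η)), where the words of l_I(T_L(η)) are formed with the shifted values (T_L(η))_j + M. -/
namespace BBS

attribute [local instance] Classical.propDecidable

noncomputable section

/-- Carrier sequence with initial load `m` for box capacity `L`. -/
def carrierM (L m : ℤ) (η : ℕ → ℤ) : ℕ → ℤ
  | 0 => m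
  | j + 1 => η j + max 0 (η j + carrierM L m η j - L)

/-- Carrier sequence (initial load `0`). -/
def carrier (L : ℤ) (η : ℕ → ℤ) : ℕ → ℤ := carrierM L 0 η

/-- Time evolution `T_L`. -/
def evol (L : ℤ) (η : ℕ → ℤ) (j : ℕ) : ℤ := min (L - η j) (carrier L η j)

/-- Time evolution `T_1^m` on binary sequences. -/
def evolOne (m : ℤ) (w : ℕ → ℤ) (j : ℕ) : ℤ := min (1 - w j) (carrierM 1 m w j)

/-- Membership in `S_{L,M}`. -/
def mem_S (L M : ℤ) (η : ℕ → ℤ) : Prop :=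
  (∃ N : ℕ, ∀ j, N ≤ j → η j = 0) ∧
  (∀ j, -M ≤ η j ∧ η j ≤ L + M) ∧
  η 0 ≤ 0 ∧
  (∀ j, max (-η j) (η j - L) ≤ M) ∧
  (∃ j, max (-η j) (η j - L) = M) ∧
  (∀ i : ℕ, ∑ j ∈ Finset.range (i + 2), η j ≤ ∑ j ∈ Finset.range (i + 1), (L - η j))

/-- Auxiliary sequence for the backward carrier. -/
def backAux (L : ℤ) (η : ℕ → ℤ) (x : ℕ) : ℕ → ℤ
  | 0 => 0
  | n + 1 => η (x - n - 1) + max 0 (η (x - n - 1) + backAux L η x n - L)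

/-- Backward carrier `ū` computed from the index `x`. -/
def backCarrier (L : ℤ) (η : ℕ → ℤ) (x j : ℕ) : ℤ :=
  if x ≤ j then 0 else backAux L η x (x - j)

/-- Reverse time evolution `R_L` computed from the index `x`. -/
def revol (L : ℤ) (η : ℕ → ℤ) (x j : ℕ) : ℤ :=
  if j < x then min (L - η j) (backCarrier L η x (j + 1)) else 0

/-- The concatenated word sequence `r_K(η)`. -/
def rSeq (L M : ℕ) (K : Set ℕ) (η : ℕ → ℤ) (n : ℕ) : ℤ :=
  if (n / (L + 2 * M) ∈ K ∧ ((n % (L + 2 * M) : ℕ) : ℤ) < η (n / (L + 2 * M)) + M) ∨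
      (n / (L + 2 * M) ∉ K ∧
        (L : ℤ) + 2 * M - (η (n / (L + 2 * M)) + M) ≤ ((n % (L + 2 * M) : ℕ) : ℤ))
  then 1 else 0

/-- The concatenated word sequence `l_K(η)`. -/
def lSeq (L M : ℕ) (K : Set ℕ) (η : ℕ → ℤ) (n : ℕ) : ℤ :=
  if (n / (L + 2 * M) ∈ K ∧
        (L : ℤ) + 2 * M - (η (n / (L + 2 * M)) + M) ≤ ((n % (L + 2 * M) : ℕ) : ℤ)) ∨
      (n / (L + 2 * M) ∉ K ∧ ((n % (L + 2 * M) : ℕ) : ℤ) < η (n / (L + 2 * M)) + M)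
  then 1 else 0

/-- Soliton flag sequence `a(η)`. -/
def flag (L : ℤ) (η : ℕ → ℤ) : ℕ → ℤ
  | 0 => 0
  | j + 1 =>
    if η j + η (j + 1) < L then 0
    else if η j + η (j + 1) = L then flag L η j else 1

/-- Primed soliton flag sequence `a′(η)` (with the convention `a′_{-1} = 0`). -/
def flag' (L : ℤ) (η : ℕ → ℤ) : ℕ → ℤ
  | 0 => if η 0 + η 1 < L then 0 else if η 0 + η 1 = L then 0 else 1
  | j + 1 =>
    if η (j + 1) + η (j + 2) < L then 0
    else if η (j + 1) + η (j + 2) = L then flag' L η j else 1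

/-- `I(η)`: right ends of contiguous 1-segments. -/
def Iset (L : ℤ) (η : ℕ → ℤ) : Set ℕ := {j | flag L η j = 1 ∧ flag L η (j + 1) = 0}

/-- `I′(η)`: left ends of contiguous right-1-segments. -/
def Iset' (L : ℤ) (η : ℕ → ℤ) : Set ℕ :=
  {j | (∀ k, j = k + 1 → flag' L η k = 0) ∧ flag' L η j = 1}

def marked (L : ℤ) (η : ℕ → ℤ) (j : ℕ) : Prop := j ∈ Iset L η ∨ j + 1 ∈ Iset L η

def marked' (L : ℤ) (η : ℕ → ℤ) (j : ℕ) : Prop :=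
  j ∈ Iset' L η ∨ ∃ k, j = k + 1 ∧ k ∈ Iset' L η

/-- Arc-count sequence `b̃(η)`. -/
def btilde (L M : ℕ) (η : ℕ → ℤ) (j : ℕ) : ℤ :=
  if marked (L : ℤ) η j then 0
  else min (η j + M) ((L : ℤ) + 2 * M - (η (j + 1) + M))

/-- `b̃_{j-1}` with the convention `b̃_{-1} = 0`. -/
def bprev (L M : ℕ) (η : ℕ → ℤ) : ℕ → ℤ
  | 0 => 0
  | j + 1 => btilde L M η j

/-- Primed arc-count sequence `b̃′(η)`. -/
def btilde' (L M : ℕ) (η : ℕ → ℤ) : ℕ → ℤ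
  | 0 => if marked' (L : ℤ) η 0 then 0 else η 0 + M
  | j + 1 =>
    if marked' (L : ℤ) η (j + 1) then 0
    else min (η (j + 1) + M) ((L : ℤ) + 2 * M - (η j + M))

/-- Background sequence `c(η)`: subsequence of `b̃` on unmarked indices, lowered by `M`. -/
def bg (L M : ℕ) (η : ℕ → ℤ) (j : ℕ) : ℤ :=
  btilde L M η (Nat.nth (fun i => ¬ marked (L : ℤ) η i) j) - M

/-- Primed background sequence `c′(η)`. -/
def bg' (L M : ℕ) (η : ℕ → ℤ) (j : ℕ) : ℤ :=
  btilde' L M η (Nat.nth (fun i => ¬ marked' (L : ℤ) η i) j) - M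

/-- Length of the word corresponding to box `j` in `d̃(η)`. -/
def wordLen (L M : ℕ) (η : ℕ → ℤ) (j : ℕ) : ℕ :=
  if j ∈ Iset (L : ℤ) η then L + 2 * M
  else ((L : ℤ) + 2 * M - bprev L M η j - btilde L M η j).toNat

def wordStart (L M : ℕ) (η : ℕ → ℤ) (j : ℕ) : ℕ :=
  ∑ k ∈ Finset.range j, wordLen L M η k

/-- Raised soliton word sequence `d̃(η)`. -/
def dTilde (L M : ℕ) (η : ℕ → ℤ) (n : ℕ) : ℤ :=
  if ∃ j, wordStart L M η j ≤ n ∧ n < wordStart L M η (j + 1) ∧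
      ((j ∈ Iset (L : ℤ) η ∧ ((n - wordStart L M η j : ℕ) : ℤ) < η j + M) ∨
        (j ∉ Iset (L : ℤ) η ∧
          (L : ℤ) + 2 * M - (η j + M) - bprev L M η j ≤ ((n - wordStart L M η j : ℕ) : ℤ)))
  then 1 else 0

/-- Length of the word corresponding to box `j` in `d̃′(η)`. -/
def wordLen' (L M : ℕ) (η : ℕ → ℤ) (j : ℕ) : ℕ :=
  if j ∈ Iset' (L : ℤ) η then L + 2 * M
  else ((L : ℤ) + 2 * M - btilde' L M η j - btilde' L M η (j + 1)).toNat

def wordStart' (L M : ℕ) (η : ℕ → ℤ) (j : ℕ) : ℕ :=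
  ∑ k ∈ Finset.range j, wordLen' L M η k

/-- Primed raised soliton word sequence `d̃′(η)`. -/
def dTilde' (L M : ℕ) (η : ℕ → ℤ) (n : ℕ) : ℤ :=
  if ∃ j, wordStart' L M η j ≤ n ∧ n < wordStart' L M η (j + 1) ∧
      ((j ∈ Iset' (L : ℤ) η ∧
          (L : ℤ) + 2 * M - (η j + M) ≤ ((n - wordStart' L M η j : ℕ) : ℤ)) ∨
        (j ∉ Iset' (L : ℤ) η ∧
          ((n - wordStart' L M η j : ℕ) : ℤ) < η j + M - btilde' L M η j))
  then 1 else 0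

/-- The sequence `0^{s 1}1^{t 1}0^{s 2}1^{t 2}⋯0^{s N}1^{t N}0^∞`. -/
def runSeq (N : ℕ) (s t : ℕ → ℕ) (n : ℕ) : ℤ :=
  if ∃ m, 1 ≤ m ∧ m ≤ N ∧
      (∑ k ∈ Finset.Icc 1 (m - 1), (s k + t k)) + s m ≤ n ∧
      n < ∑ k ∈ Finset.Icc 1 m, (s k + t k)
  then 1 else 0

/-- `w = 0^{s 1}1^{t 1}⋯1^{t N}0^∞` is the (maximal) run decomposition of `w`. -/
def IsRunDecomp (N : ℕ) (s t : ℕ → ℕ) (w : ℕ → ℤ) : Prop :=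
  (∀ m, 1 ≤ m → m ≤ N → 1 ≤ t m) ∧ (∀ m, 2 ≤ m → m ≤ N → 1 ≤ s m) ∧ w = runSeq N s t

def shrinkS (M : ℕ) (s : ℕ → ℕ) (m : ℕ) : ℕ := if m = 1 then s 1 - M else s m - 2 * M

def shrinkT (M : ℕ) (t : ℕ → ℕ) (m : ℕ) : ℕ := t m - 2 * M

/-- `d` is the soliton sequence `d(η)`. -/
def IsSolitonSeq (L M : ℕ) (η : ℕ → ℤ) (d : ℕ → ℤ) : Prop :=
  ∃ N s t, IsRunDecomp N s t (dTilde L M η) ∧ d = runSeq N (shrinkS M s) (shrinkT M t)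

/-- `d` is the primed soliton sequence `d′(η)`. -/
def IsSolitonSeq' (L M : ℕ) (η : ℕ → ℤ) (d : ℕ → ℤ) : Prop :=
  ∃ N s t, IsRunDecomp N s t (dTilde' L M η) ∧ d = runSeq N (shrinkS M s) (shrinkT M t)

/-- Forward shift `Λ`. -/
def lam (c : ℕ → ℤ) : ℕ → ℤ
  | 0 => 0
  | j + 1 => c j

/-- Membership in the background space `S^{(b)}_{L,M}`. -/
def mem_Sb (L M : ℤ) (c : ℕ → ℤ) : Prop := mem_S L M c ∧ ∀ j, c j + c (j + 1) ≤ L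

/-- Membership in the soliton space `S^{(f)}_L`: a binary sequence with finitely many
ones all of whose maximal runs of equal letters have length greater than `L`. -/
def mem_Sf (L : ℕ) (w : ℕ → ℤ) : Prop :=
  (∀ n, w n = 0 ∨ w n = 1) ∧ (∃ N : ℕ, ∀ n, N ≤ n → w n = 0) ∧
  ∀ n m : ℕ, n ≤ m → (∀ j, n ≤ j → j ≤ m → w j = w n) →
    (n = 0 ∨ w (n - 1) ≠ w n) → w (m + 1) ≠ w m → L < m + 1 - n

/-- Stages of the iterative arc-pairing construction: at each stage, connect every pair
`i < j` of yet-unpaired positions with `w i = a`, `w j = b` such that every position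
strictly between them is already paired. -/
def arcStage (a b : ℤ) (w : ℕ → ℤ) : ℕ → Set (ℕ × ℕ)
  | 0 => ∅
  | k + 1 => arcStage a b w k ∪
      {p : ℕ × ℕ | p.1 < p.2 ∧ w p.1 = a ∧ w p.2 = b ∧
        (∀ q ∈ arcStage a b w k, p.1 ≠ q.1 ∧ p.1 ≠ q.2 ∧ p.2 ≠ q.1 ∧ p.2 ≠ q.2) ∧
        (∀ m, p.1 < m → m < p.2 → ∃ q ∈ arcStage a b w k, m = q.1 ∨ m = q.2)}

/-- The arc pairing: `arcPairing 1 0 w` is the 10-arc pairing of `w`, and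
`arcPairing 0 1 w` is the 01-arc pairing of `w`. -/
def arcPairing (a b : ℤ) (w : ℕ → ℤ) : Set (ℕ × ℕ) := ⋃ k, arcStage a b w k

/-- Extension of `η` to integer indices with `η_j = L` for `j < 0`. -/
def etaExt (L : ℕ) (η : ℕ → ℤ) (j : ℤ) : ℤ := if j < 0 then (L : ℤ) else η j.toNat

end

end BBS

open BBS

/-!
Raising every value of a state, and the load of its carrier, by `M` turns the dynamics of capacity
`L` into that of capacity `L + 2 * M`; this moves the values into `[0, L + 2 * M]` and reduces the
claim to `M = 0`, with box capacity `N = L + 2 * M`.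

A carrier of capacity-one boxes that enters the word of box `j` with load `v` leaves it with the
load of the large carrier after box `j`. Passing `0^{N-a}1^a` it first drops `min (N - a) v` balls
and then picks up `a`. Passing `1^a0^{N-a}` it first picks up `a` balls and then has `a + v` of
them for `N - a` zeros, so if `N ≤ a + v` it inverts the word and again leaves with load
`a + (a + v - N)`.
-/

namespace BBS

/-- Time evolution by a carrier with initial load `m`, for box capacity `L`. It specializes to
`evol L` for `m = 0`, and to `evolOne m` for `L = 1`. -/
def evolM (L m : ℤ) (η : ℕ → ℤ) (j : ℕ) : ℤ := min (L - η j) (carrierM L m η j)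

section Carrier

variable {L m : ℤ} {η η' : ℕ → ℤ}

theorem carrierM_nonneg (hm : 0 ≤ m) (hη : ∀ j, 0 ≤ η j) : ∀ j, 0 ≤ carrierM L m η j
  | 0 => hm
  | j + 1 => add_nonneg (hη j) (le_max_left _ _)

theorem carrierM_add (n k : ℕ) :
    carrierM L m η (n + k) = carrierM L (carrierM L m η n) (fun i => η (n + i)) k := by
  induction k with
  | zero => rfl
  | succ k ih => rw [← Nat.add_assoc, carrierM, ih, carrierM]

theorem carrierM_congr {k : ℕ} (h : ∀ i < k, η i = η' i) :
    carrierM L m η k = carrierM L m η' k := by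
  induction k with
  | zero => rfl
  | succ k ih =>
    rw [carrierM, carrierM, h k k.lt_succ_self, ih fun i hi => h i (hi.trans k.lt_succ_self)]

theorem carrierM_add_const (M : ℤ) (j : ℕ) :
    carrierM (L + 2 * M) (m + M) (fun i => η i + M) j = carrierM L m η j + M := by
  induction j with
  | zero => rfl
  | succ j ih =>
    have excess : η j + M + (carrierM L m η j + M) - (L + 2 * M) = η j + carrierM L m η j - L := by
      ring
    rw [carrierM, carrierM, ih, excess, add_right_comm]

theorem evolM_add_const (M : ℤ) :
    evolM (L + 2 * M) (m + M) (fun i => η i + M) = fun j => evolM L m η j + M := by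
  funext j
  rw [evolM, evolM, carrierM_add_const, ← min_add_add_right]
  ring_nf

end Carrier

section ConcatWords

/-- The concatenation of the words `x 0`, `x 1`, … of common length `N`; the letters `x j k` with
`N ≤ k` are ignored. -/
def concatWords (N : ℕ) (x : ℕ → ℕ → ℤ) (n : ℕ) : ℤ := x (n / N) (n % N)

variable {N : ℕ} {x y : ℕ → ℕ → ℤ} {L : ℤ} {v : ℕ → ℤ}

theorem concatWords_mul_add (j : ℕ) {k : ℕ} (hk : k < N) :
    concatWords N x (N * j + k) = x j k := by
  rw [concatWords, Nat.mul_add_div (by omega), Nat.div_eq_of_lt hk, Nat.add_zero, Nat.mul_add_mod,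
    Nat.mod_eq_of_lt hk]

theorem concatWords_congr (hN : 0 < N) (h : ∀ j, ∀ k < N, x j k = y j k) :
    concatWords N x = concatWords N y :=
  funext fun _ => h _ _ (Nat.mod_lt _ hN)

theorem carrierM_concatWords_mul_add {j : ℕ} (hj : carrierM L (v 0) (concatWords N x) (N * j) = v j)
    {k : ℕ} (hk : k ≤ N) :
    carrierM L (v 0) (concatWords N x) (N * j + k) = carrierM L (v j) (x j) k := by
  rw [carrierM_add, hj]
  exact carrierM_congr fun i hi => concatWords_mul_add j (hi.trans_le hk)

theorem carrierM_concatWords_mul (hv : ∀ j, carrierM L (v j) (x j) N = v (j + 1)) (j : ℕ) :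
    carrierM L (v 0) (concatWords N x) (N * j) = v j := by
  induction j with
  | zero => rfl
  | succ j ih => rw [Nat.mul_succ, carrierM_concatWords_mul_add ih le_rfl, hv]

theorem evolM_concatWords (hN : 0 < N) (hv : ∀ j, carrierM L (v j) (x j) N = v (j + 1)) :
    evolM L (v 0) (concatWords N x) = concatWords N fun j => evolM L (v j) (x j) := by
  funext n
  have hk : n % N < N := Nat.mod_lt n hN
  rw [← Nat.div_add_mod n N, concatWords_mul_add _ hk, evolM, concatWords_mul_add _ hk,
    carrierM_concatWords_mul_add (carrierM_concatWords_mul hv _) hk.le, evolM]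

end ConcatWords

section Words

/-- The sequence `1^a 0^∞`, whose prefix of length `N ≥ a` is the word `1^a 0^{N-a}`. -/
def onesZeros (a : ℤ) (k : ℕ) : ℤ := if (k : ℤ) < a then 1 else 0

/-- The sequence `0^b 1^∞`, whose prefix of length `N ≥ b` is the word `0^b 1^{N-b}`. -/
def zerosOnes (b : ℤ) (k : ℕ) : ℤ := if b ≤ (k : ℤ) then 1 else 0

variable {a b v : ℤ}

theorem carrierM_one_onesZeros (ha : 0 ≤ a) (hv : 0 ≤ v) (k : ℕ) :
    carrierM 1 v (onesZeros a) k = max 0 (v + min (k : ℤ) (2 * a - k)) := by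
  induction k with
  | zero => simp only [carrierM]; omega
  | succ k ih =>
    rw [carrierM, ih, onesZeros]
    split_ifs <;> omega

theorem carrierM_one_zerosOnes (hb : 0 ≤ b) (hv : 0 ≤ v) (k : ℕ) :
    carrierM 1 v (zerosOnes b) k = max 0 (v - min (k : ℤ) b) + max 0 (k - b) := by
  induction k with
  | zero => simp only [carrierM]; omega
  | succ k ih =>
    rw [carrierM, ih, zerosOnes]
    split_ifs <;> omega

theorem evolM_one_onesZeros (ha : 0 ≤ a) (hv : 0 ≤ v) {k : ℕ} (hk : (k : ℤ) < 2 * a + v) :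
    evolM 1 v (onesZeros a) k = zerosOnes a k := by
  rw [evolM, carrierM_one_onesZeros ha hv, onesZeros, zerosOnes]
  split_ifs <;> omega

theorem evolM_one_zerosOnes (hb : 0 ≤ b) (hv : 0 ≤ v) (k : ℕ) :
    evolM 1 v (zerosOnes b) k = onesZeros (min b v) k := by
  rw [evolM, carrierM_one_zerosOnes hb hv, onesZeros, zerosOnes]
  split_ifs <;> omega

end Words

section BoxWord

open scoped Classical in
/-- The word of box `j` in the binary sequence `r_K` of a state `η` with values in `[0, N]`, to be
cut to length `N`. The words of `l_K` are those of `r_{Kᶜ}`. -/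
noncomputable def boxWord (N : ℤ) (K : Set ℕ) (η : ℕ → ℤ) (j : ℕ) : ℕ → ℤ :=
  if j ∈ K then onesZeros (η j) else zerosOnes (N - η j)

theorem rSeq_eq_concatWords (L M : ℕ) (K : Set ℕ) (η : ℕ → ℤ) :
    rSeq L M K η = concatWords (L + 2 * M) (boxWord (L + 2 * M) K fun j => η j + M) := by
  funext n
  by_cases hK : n / (L + 2 * M) ∈ K <;>
    simp [rSeq, concatWords, boxWord, onesZeros, zerosOnes, hK]

theorem lSeq_eq_rSeq_compl (L M : ℕ) (K : Set ℕ) (η : ℕ → ℤ) :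
    lSeq L M K η = rSeq L M Kᶜ η := by
  funext n
  by_cases hK : n / (L + 2 * M) ∈ K <;> simp [lSeq, rSeq, hK]

variable {N : ℕ} {K : Set ℕ} {η : ℕ → ℤ} {m : ℤ} {j : ℕ}

theorem carrierM_one_boxWord (hη : η j ∈ Set.Icc 0 (N : ℤ)) (hu : 0 ≤ carrierM N m η j)
    (hK : j ∈ K → N ≤ η j + carrierM N m η j) :
    carrierM 1 (carrierM N m η j) (boxWord N K η j) N = carrierM N m η (j + 1) := by
  obtain ⟨hη0, hηN⟩ := hη
  rw [carrierM, boxWord]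
  split_ifs with hj
  · have := hK hj
    rw [carrierM_one_onesZeros hη0 hu]
    omega
  · rw [carrierM_one_zerosOnes (sub_nonneg.2 hηN) hu]
    omega

theorem evolM_one_boxWord (hη : η j ∈ Set.Icc 0 (N : ℤ)) (hu : 0 ≤ carrierM N m η j)
    (hK : j ∈ K → N ≤ η j + carrierM N m η j) {k : ℕ} (hk : k < N) :
    evolM 1 (carrierM N m η j) (boxWord N K η j) k = boxWord N Kᶜ (evolM N m η) j k := by
  obtain ⟨hη0, hηN⟩ := hη
  by_cases hj : j ∈ K
  · have full := hK hj
    have evol_eq : evolM N m η j = N - η j := min_eq_left (sub_le_iff_le_add'.2 full)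
    rw [boxWord, boxWord, if_pos hj, if_neg (Set.notMem_compl_iff.2 hj), evol_eq, sub_sub_cancel]
    exact evolM_one_onesZeros hη0 hu (by omega)
  · rw [boxWord, boxWord, if_neg hj, if_pos (Set.mem_compl hj)]
    exact evolM_one_zerosOnes (sub_nonneg.2 hηN) hu k

theorem evolM_one_concatWords_boxWord (hN : 0 < N) (hη : ∀ j, η j ∈ Set.Icc 0 (N : ℤ)) (hm : 0 ≤ m)
    (hK : ∀ j ∈ K, N ≤ η j + carrierM N m η j) :
    evolM 1 m (concatWords N (boxWord N K η)) =
      concatWords N (boxWord N Kᶜ (evolM N m η)) := by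
  have hu : ∀ j, 0 ≤ carrierM N m η j := carrierM_nonneg hm fun j => (hη j).1
  have load_succ j := carrierM_one_boxWord (hη j) (hu j) (hK j)
  calc evolM 1 m (concatWords N (boxWord N K η))
      = concatWords N fun j => evolM 1 (carrierM N m η j) (boxWord N K η j) :=
        evolM_concatWords hN load_succ
    _ = concatWords N (boxWord N Kᶜ (evolM N m η)) :=
        concatWords_congr hN fun j _ hk => evolM_one_boxWord (hη j) (hu j) (hK j) hk

end BoxWord

end BBS

theorem stmt_3_general {L M : ℕ} (hLM : 0 < L + 2 * M) {m : ℤ} (hm : -M ≤ m) {η : ℕ → ℤ}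
    (hη : ∀ j, -M ≤ η j ∧ η j ≤ L + M) {I : Set ℕ}
    (hI : ∀ j ∈ I, (L : ℤ) ≤ η j + carrierM L m η j) :
    evolM 1 (m + M) (rSeq L M I η) = lSeq L M I (evolM L m η) := by
  have raised_mem j : η j + M ∈ Set.Icc 0 ((L + 2 * M : ℕ) : ℤ) := by
    have := hη j
    constructor <;> push_cast <;> omega
  have raised_full j (hj : j ∈ I) : ((L + 2 * M : ℕ) : ℤ) ≤
      η j + M + carrierM (L + 2 * M : ℕ) (m + M) (fun i => η i + M) j := by
    have := hI j hj
    push_cast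
    rw [carrierM_add_const]
    omega
  have raised :=
    evolM_one_concatWords_boxWord hLM raised_mem (neg_le_iff_add_nonneg.1 hm) raised_full
  push_cast at raised
  rw [rSeq_eq_concatWords, raised, evolM_add_const, lSeq_eq_rSeq_compl, rSeq_eq_concatWords]

/-- Theorem 2.2: for every subset `I` of `J(η)`,
`T_1^M(r_I(η)) = l_I(T_L(η))`. -/
theorem stmt_3 (L M : ℕ) (hL : 1 ≤ L) (η : ℕ → ℤ) (hη : mem_S L M η)
    (I : Set ℕ) (hI : I ⊆ {j : ℕ | (L : ℤ) ≤ η j + carrier L η j}) :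
    evolOne M (rSeq L M I η) = lSeq L M I (evol L η) := by
  rw [← zero_add (M : ℤ)]
  exact stmt_3_general (by omega) (neg_nonpos.2 M.cast_nonneg) hη.2.1 hI
end

section
/- For every η ∈ S_{L,M}, the primed arc-count sequence of T_L(η) is the forward shift of the arc-count sequence of η: b̃′(T_L(η))_0 = M and b̃′(T_L(η))_j = b̃(η)_{j−1} for every j ≥ 1. -/
namespace BBS

attribute [local instance] Classical.propDecidable

end BBS

open BBS

/-!
Let `u` be the carrier sequence and `e_j = η_j + u_j - L` its excess over the capacity. Then
`u_{j+1} = η_j + e_j⁺` and `T_L(η)_j = L - η_j - e_j⁻`. Since one of `e_j⁺`, `e_j⁻` vanishes,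
`min (T_L(η)_{j+1}) (L - T_L(η)_j) = min (η_j) (L - η_{j+1})`, which is the shift of arc counts at
unmarked indices. It remains to see `I′(T_L(η)) = I(η)`. Where `e_j > 0`, the pair sums of `T_L(η)`
and `η` at `j` lie on opposite sides of `L`, so the flags `a′_{j-1}` and `a′_j` of `T_L(η)` are
complementary to `a_j` and `a_{j+1}` of `η`. Where `e_j ≤ 0`, we have `a_j = 0`, while `a′` cannot
rise from `0` to `1` at `j`, so `j` belongs to neither set.
-/

namespace BBS

section Evolution

variable (L : ℤ) (η : ℕ → ℤ) (j : ℕ)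

/-- The excess `η_j + u_j - L` of the contents of box `j` and the carrier over the capacity `L`. -/
def excess : ℤ := η j + carrier L η j - L

theorem excess_zero : excess L η 0 = η 0 - L := by
  simp only [excess, carrier, carrierM, add_zero]

theorem carrier_succ : carrier L η (j + 1) = η j + max 0 (excess L η j) := rfl

theorem excess_succ :
    excess L η (j + 1) = η j + η (j + 1) - L + max 0 (excess L η j) := by
  rw [excess, carrier_succ]
  ring

theorem evol_eq_sub_add_min : evol L η j = L - η j + min 0 (excess L η j) := by
  unfold evol excess
  omega

theorem evol_succ :
    evol L η (j + 1) = min (L - η (j + 1)) (η j + max 0 (excess L η j)) := by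
  rw [evol, carrier_succ]

theorem min_evol_succ_sub_evol :
    min (evol L η (j + 1)) (L - evol L η j) = min (η j) (L - η (j + 1)) := by
  rw [evol_succ, evol_eq_sub_add_min]
  omega

theorem evol_add_evol_succ_sub :
    evol L η j + evol L η (j + 1) - L =
      min (-(η j + η (j + 1) - L)) (max 0 (excess L η j)) + min 0 (excess L η j) := by
  rw [evol_succ, evol_eq_sub_add_min]
  omega

end Evolution

section Flags

/-- The common update rule of the two flag sequences: the next flag, computed from the difference
`x = η_j + η_{j+1} - L` and the previous flag `a`. -/
def flagStep (x a : ℤ) : ℤ := if x < 0 then 0 else if x = 0 then a else 1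

theorem flagStep_of_neg {x : ℤ} (hx : x < 0) (a : ℤ) : flagStep x a = 0 := if_pos hx

theorem flagStep_of_pos {x : ℤ} (hx : 0 < x) (a : ℤ) : flagStep x a = 1 := by
  rw [flagStep, if_neg hx.not_gt, if_neg hx.ne']

theorem flagStep_zero_right {x : ℤ} (hx : x ≤ 0) : flagStep x 0 = 0 := by
  unfold flagStep
  split_ifs <;> omega

theorem flagStep_min_neg {e : ℤ} (he : 0 < e) (x a : ℤ) :
    flagStep (min (-x) e) (1 - a) = 1 - flagStep x a := by
  unfold flagStep
  split_ifs <;> omega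

/-- The primed flag `a′_{j-1}`, with the convention `a′_{-1} = 0`. -/
def prevFlag' (L : ℤ) (η : ℕ → ℤ) : ℕ → ℤ
  | 0 => 0
  | j + 1 => flag' L η j

variable (L : ℤ) (η : ℕ → ℤ) (j : ℕ)

theorem flag_succ : flag L η (j + 1) = flagStep (η j + η (j + 1) - L) (flag L η j) := by
  simp only [flag, flagStep, sub_neg, sub_eq_zero]

theorem flag'_eq_flagStep :
    flag' L η j = flagStep (η j + η (j + 1) - L) (prevFlag' L η j) := by
  cases j <;> simp only [flag', prevFlag', flagStep, sub_neg, sub_eq_zero]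

theorem mem_Iset'_iff : j ∈ Iset' L η ↔ prevFlag' L η j = 0 ∧ flag' L η j = 1 := by
  cases j <;> simp [Iset', prevFlag']

variable {L η j}

theorem flag_eq_zero_of_excess_nonpos (he : excess L η j ≤ 0) : flag L η j = 0 := by
  induction j with
  | zero => rfl
  | succ j ih =>
    rw [excess_succ] at he
    rw [flag_succ]
    by_cases hj : excess L η j ≤ 0
    · rw [ih hj, flagStep_zero_right (by omega)]
    · exact flagStep_of_neg (by omega) _

theorem flag'_evol_eq_one_sub_flag_succ (he : 0 < excess L η j)
    (hprev : prevFlag' L (evol L η) j = 1 - flag L η j) :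
    flag' L (evol L η) j = 1 - flag L η (j + 1) := by
  rw [flag'_eq_flagStep, evol_add_evol_succ_sub, max_eq_right he.le, min_eq_left he.le, add_zero,
    hprev, flagStep_min_neg he, flag_succ]

theorem prevFlag'_evol_eq_one_sub_flag (h0 : η 0 ≤ L) (he : 0 < excess L η j) :
    prevFlag' L (evol L η) j = 1 - flag L η j := by
  induction j with
  | zero =>
    rw [excess_zero] at he
    omega
  | succ j ih =>
    by_cases hj : 0 < excess L η j
    · exact flag'_evol_eq_one_sub_flag_succ hj (ih hj)
    · have hsum : 0 < η j + η (j + 1) - L := by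
        rw [excess_succ] at he
        omega
      have hsum_evol : evol L η j + evol L η (j + 1) - L < 0 := by
        rw [evol_add_evol_succ_sub]
        omega
      rw [prevFlag', flag'_eq_flagStep, flagStep_of_neg hsum_evol, flag_succ, flagStep_of_pos hsum,
        sub_self]

theorem flag'_evol_eq_zero_of_excess_nonpos (he : excess L η j ≤ 0)
    (hprev : prevFlag' L (evol L η) j = 0) : flag' L (evol L η) j = 0 := by
  have hsum_evol : evol L η j + evol L η (j + 1) - L ≤ 0 := by
    rw [evol_add_evol_succ_sub]
    omega
  rw [flag'_eq_flagStep, hprev, flagStep_zero_right hsum_evol]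

end Flags

section Marks

variable {L : ℤ} {η : ℕ → ℤ}

theorem Iset'_evol (h0 : η 0 ≤ L) : Iset' L (evol L η) = Iset L η := by
  ext j
  rw [mem_Iset'_iff, Iset, Set.mem_ofPred_eq]
  rcases le_or_gt (excess L η j) 0 with he | he
  · have hflag := flag_eq_zero_of_excess_nonpos he
    have hflag' := flag'_evol_eq_zero_of_excess_nonpos he
    omega
  · have hprev := prevFlag'_evol_eq_one_sub_flag h0 he
    have hflag' := flag'_evol_eq_one_sub_flag_succ he hprev
    omega

theorem zero_notMem_Iset : 0 ∉ Iset L η := fun h => zero_ne_one h.1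

theorem marked'_zero : marked' L η 0 ↔ 0 ∈ Iset' L η := by
  simp [marked']

theorem marked'_succ (j : ℕ) : marked' L η (j + 1) ↔ j ∈ Iset' L η ∨ j + 1 ∈ Iset' L η := by
  simp [marked', or_comm]

theorem not_marked'_evol_zero (h0 : η 0 ≤ L) : ¬ marked' L (evol L η) 0 := by
  rw [marked'_zero, Iset'_evol h0]
  exact zero_notMem_Iset

theorem marked'_evol_succ (h0 : η 0 ≤ L) (j : ℕ) :
    marked' L (evol L η) (j + 1) ↔ marked L η j := by
  rw [marked'_succ, Iset'_evol h0, marked]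

end Marks

end BBS

theorem stmt_9_general (L M : ℕ) (η : ℕ → ℤ) (h0 : η 0 ≤ L) :
    btilde' L M (evol L η) 0 = M ∧
    (∀ j : ℕ, btilde' L M (evol L η) (j + 1) = btilde L M η j) := by
  refine ⟨?_, fun j => ?_⟩
  · have hevol : evol L η 0 = 0 := min_eq_right (sub_nonneg.2 h0)
    rw [btilde', if_neg (not_marked'_evol_zero h0), hevol, zero_add]
  · have hmarked := marked'_evol_succ h0 j
    have hmin := min_evol_succ_sub_evol L η j
    by_cases hj : marked L η j
    · rw [btilde', btilde, if_pos hj, if_pos (hmarked.2 hj)]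
    · rw [btilde', btilde, if_neg hj, if_neg (mt hmarked.1 hj)]
      omega

/-- the primed arc-count sequence of `T_L(η)` is the forward shift of the
arc-count sequence of `η`. -/
theorem stmt_9 (L M : ℕ) (hL : 1 ≤ L) (η : ℕ → ℤ) (hη : mem_S L M η) :
    btilde' L M (evol L η) 0 = M ∧
    (∀ j : ℕ, btilde' L M (evol L η) (j + 1) = btilde L M η j) :=
  stmt_9_general L M η (hη.2.2.1.trans L.cast_nonneg)
end
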